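/- arXiv:math/0406013 — 2 statements merged into one kernel-verified Lean document; each statement's English description precedes it below -/
import Mathlib

section
/- Let m ≥ 2, let F_m be a free group with free basis A of size m, and let φ : F_m → ℤ be a surjective homomorphism. Let a ∈ A ∪ A^{-1} be a letter with φ(a) maximal among all letters of A ∪ A^{-1}. For k ≥ 2, let Ω be the set of all freely reduced words of length k-1 over A^{±1} with φ(v) ≥ 0, and let Ω₁ ⊆ Ω consist of those words of Ω whose initial letter is different from a^{-1}. Then |Ω₁| ≥ ((2m-2)/(2m-1))·|Ω|. -/
open Filter Topology

/-- A word over the alphabet `A^{±1}` (a letter is a pair `(i, b)`, where `b = true`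
means the generator `i` and `b = false` means its inverse) is freely reduced iff
it is its own free reduction. -/
def IsReducedWord {m : ℕ} (w : List (Fin m × Bool)) : Prop :=
  FreeGroup.reduce w = w

/-- A *good* word w.r.t. `φ : F_m → ℤ` and the letter `a`: it is freely reduced,
its first letter is `a`, its last letter is not `a⁻¹`, and its `φ`-value is positive. -/
def IsGoodWord {m : ℕ} (φ : FreeGroup (Fin m) → ℤ) (a : Fin m × Bool)
    (w : List (Fin m × Bool)) : Prop :=
  IsReducedWord w ∧ w.head? = some a ∧ w.getLast? ≠ some (a.1, !a.2) ∧
    0 < φ (FreeGroup.mk w)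

/-!
Let `x ≠ y` be letters with `φ x ≤ φ y`. In a reduced word starting with `x`, replace the maximal
prefix of the form `x y⁻¹ x y⁻¹ ⋯` letter by letter by `y x⁻¹ y x⁻¹ ⋯`. Maximality of the prefix
keeps the word reduced and makes the same operation with `x` and `y` interchanged its inverse, and
no letter of the prefix loses `φ`-value. So at least as many words of `Ω` start with `y` as with
`x`. Since `x = a⁻¹` has the least `φ`-value among the `2m` letters, at most a fraction `1 / (2m)`
of `Ω` starts with `a⁻¹`, and `1 - 1 / (2m) ≥ (2m - 2) / (2m - 1)`.
-/

variable {α G : Type*}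

/-- The inverse `x⁻¹` of a letter `x ∈ A^{±1}`. -/
def letterInv (x : α × Bool) : α × Bool := (x.1, !x.2)

theorem mk_singleton_letterInv (x : α × Bool) :
    FreeGroup.mk [letterInv x] = (FreeGroup.mk [x])⁻¹ := by
  simp [FreeGroup.inv_mk, FreeGroup.invRev, letterInv]

theorem isReduced_cons_cons_iff_ne_letterInv {x y : α × Bool} {w : List (α × Bool)} :
    FreeGroup.IsReduced (x :: y :: w) ↔ y ≠ letterInv x ∧ FreeGroup.IsReduced (y :: w) := by
  rw [FreeGroup.isReduced_cons_cons, letterInv, ne_eq, Prod.ext_iff, not_and, Bool.eq_not,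
    not_not, eq_comm (a := y.1), eq_comm (a := y.2)]

section SwapPrefix

variable [DecidableEq α]

/-- The exchange of two letters `x` and `y` at the front of a word: its maximal prefix of the form
`x y⁻¹ x y⁻¹ ⋯` is replaced letter by letter by `y x⁻¹ y x⁻¹ ⋯`. -/
def swapPrefix (x y : α × Bool) : List (α × Bool) → List (α × Bool)
  | [] => []
  | z :: w => if z = x then y :: swapPrefix (letterInv y) (letterInv x) w else z :: w

@[simp]
theorem swapPrefix_nil (x y : α × Bool) : swapPrefix x y [] = [] := rfl

@[simp]
theorem swapPrefix_cons_self (x y : α × Bool) (w : List (α × Bool)) :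
    swapPrefix x y (x :: w) = y :: swapPrefix (letterInv y) (letterInv x) w :=
  if_pos rfl

theorem swapPrefix_cons_of_ne {x z : α × Bool} (h : z ≠ x) (y : α × Bool) (w : List (α × Bool)) :
    swapPrefix x y (z :: w) = z :: w :=
  if_neg h

@[simp]
theorem length_swapPrefix (x y : α × Bool) (w : List (α × Bool)) :
    (swapPrefix x y w).length = w.length := by
  induction w generalizing x y with
  | nil => rfl
  | cons z w ih =>
    rcases eq_or_ne z x with rfl | hz
    · rw [swapPrefix_cons_self, List.length_cons, List.length_cons, ih]
    · rw [swapPrefix_cons_of_ne hz]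

theorem isReduced_swapPrefix_cons_self {x : α × Bool} (y : α × Bool) {w : List (α × Bool)}
    (h : FreeGroup.IsReduced (x :: w)) : FreeGroup.IsReduced (swapPrefix x y (x :: w)) := by
  induction w generalizing x y with
  | nil => simp
  | cons z w ih =>
    obtain ⟨hzx, hzw⟩ := isReduced_cons_cons_iff_ne_letterInv.1 h
    rw [swapPrefix_cons_self]
    rcases eq_or_ne z (letterInv y) with rfl | hzy
    · have hred := ih (letterInv x) hzw
      rw [swapPrefix_cons_self] at hred ⊢
      exact isReduced_cons_cons_iff_ne_letterInv.2 ⟨hzx.symm, hred⟩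
    · rw [swapPrefix_cons_of_ne hzy]
      exact isReduced_cons_cons_iff_ne_letterInv.2 ⟨hzy, hzw⟩

theorem swapPrefix_swapPrefix_cons_self {x : α × Bool} (y : α × Bool) {w : List (α × Bool)}
    (h : FreeGroup.IsReduced (x :: w)) :
    swapPrefix y x (swapPrefix x y (x :: w)) = x :: w := by
  induction w generalizing x y with
  | nil => simp
  | cons z w ih =>
    obtain ⟨hzx, hzw⟩ := isReduced_cons_cons_iff_ne_letterInv.1 h
    rw [swapPrefix_cons_self, swapPrefix_cons_self]
    rcases eq_or_ne z (letterInv y) with rfl | hzy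
    · rw [ih (letterInv x) hzw]
    · rw [swapPrefix_cons_of_ne hzy, swapPrefix_cons_of_ne hzx]

end SwapPrefix

theorem card_mul_le_ncard_of_forall_le_ncard_fiber {β ι : Type*} [Fintype ι] {S : Set β}
    (hS : S.Finite) (f : β → Option ι) {c : ℕ} (hc : ∀ i, c ≤ {x ∈ S | f x = some i}.ncard) :
    Fintype.card ι * c ≤ S.ncard := by
  have hfin (i : ι) : {x ∈ S | f x = some i}.Finite := hS.subset (Set.sep_subset _ _)
  have hdisj : Pairwise (Function.onFun Disjoint fun i => {x ∈ S | f x = some i}) :=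
    fun i j hij => Set.disjoint_left.2 fun x hi hj =>
      hij (Option.some_injective ι (hi.2.symm.trans hj.2))
  calc Fintype.card ι * c
      ≤ ∑ i, {x ∈ S | f x = some i}.ncard := by
        simpa using Finset.card_nsmul_le_sum Finset.univ _ c fun i _ => hc i
    _ = (⋃ i, {x ∈ S | f x = some i}).ncard := by
        rw [Set.ncard_iUnion_of_finite hfin hdisj, finsum_eq_sum_of_fintype]
    _ ≤ S.ncard := Set.ncard_le_ncard (Set.iUnion_subset fun i => Set.sep_subset _ _) hS

section OrderedGroup

variable [Group G] [Preorder G] (φ : FreeGroup α →* G)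

/-- The set `Ω` of reduced words of length `n` with nonnegative `φ`-value. The value group `G` is
written multiplicatively, so nonnegativity reads `1 ≤ φ w`. -/
def nonnegReducedWords (n : ℕ) : Set (List (α × Bool)) :=
  {w | w.length = n ∧ FreeGroup.IsReduced w ∧ 1 ≤ φ (FreeGroup.mk w)}

theorem finite_nonnegReducedWords [Finite α] (n : ℕ) : (nonnegReducedWords φ n).Finite :=
  (List.finite_length_eq (α × Bool) n).subset fun _ hw => hw.1

variable [MulLeftMono G] [MulRightMono G]

theorem map_mk_le_map_mk_swapPrefix [DecidableEq α] {x y : α × Bool}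
    (hxy : φ (FreeGroup.mk [x]) ≤ φ (FreeGroup.mk [y])) (w : List (α × Bool)) :
    φ (FreeGroup.mk w) ≤ φ (FreeGroup.mk (swapPrefix x y w)) := by
  induction w generalizing x y with
  | nil => rfl
  | cons z w ih =>
    rcases eq_or_ne z x with rfl | hz
    · have hyx : φ (FreeGroup.mk [letterInv y]) ≤ φ (FreeGroup.mk [letterInv z]) := by
        simpa only [mk_singleton_letterInv, map_inv, inv_le_inv_iff] using hxy
      have map_cons (u : α × Bool) (v : List (α × Bool)) :
          φ (FreeGroup.mk (u :: v)) = φ (FreeGroup.mk [u]) * φ (FreeGroup.mk v) := by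
        rw [← map_mul, FreeGroup.mul_mk, List.singleton_append]
      rw [swapPrefix_cons_self, map_cons, map_cons y]
      exact mul_le_mul' hxy (ih hyx)
    · rw [swapPrefix_cons_of_ne hz]

theorem ncard_head_eq_le_of_map_mk_le [Finite α] {x y : α × Bool}
    (hxy : φ (FreeGroup.mk [x]) ≤ φ (FreeGroup.mk [y])) (n : ℕ) :
    {w ∈ nonnegReducedWords φ n | w.head? = some x}.ncard ≤
      {w ∈ nonnegReducedWords φ n | w.head? = some y}.ncard := by
  classical
  refine Set.ncard_le_ncard_of_injOn (swapPrefix x y) ?_ ?_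
    ((finite_nonnegReducedWords φ n).subset (Set.sep_subset _ _))
  · rintro w ⟨⟨hlen, hred, hφw⟩, hwx⟩
    obtain ⟨v, rfl⟩ := List.head?_eq_some_iff.1 hwx
    exact ⟨⟨(length_swapPrefix x y _).trans hlen, isReduced_swapPrefix_cons_self y hred,
      hφw.trans (map_mk_le_map_mk_swapPrefix φ hxy _)⟩, by simp⟩
  · refine Set.LeftInvOn.injOn (f₁' := swapPrefix y x) ?_
    rintro w ⟨⟨-, hred, -⟩, hwx⟩
    obtain ⟨v, rfl⟩ := List.head?_eq_some_iff.1 hwx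
    exact swapPrefix_swapPrefix_cons_self y hred

theorem omega_one_lower_bound_general [Fintype α] {a : α × Bool}
    (ha : ∀ ℓ : α × Bool, φ (FreeGroup.mk [ℓ]) ≤ φ (FreeGroup.mk [a])) (n : ℕ) :
    (2 * (Fintype.card α : ℝ) - 1) / (2 * (Fintype.card α : ℝ)) *
        ((nonnegReducedWords φ n).ncard : ℝ) ≤
      ({w ∈ nonnegReducedWords φ n | w.head? ≠ some (letterInv a)}.ncard : ℝ) := by
  have hfin := finite_nonnegReducedWords φ n
  have hmin (ℓ : α × Bool) : φ (FreeGroup.mk [letterInv a]) ≤ φ (FreeGroup.mk [ℓ]) := by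
    have hℓ := ha (letterInv ℓ)
    rw [mk_singleton_letterInv, map_inv] at hℓ ⊢
    exact inv_le_of_inv_le' hℓ
  have hshare : (2 * Fintype.card α : ℝ) *
      {w ∈ nonnegReducedWords φ n | w.head? = some (letterInv a)}.ncard ≤
        (nonnegReducedWords φ n).ncard := by
    have h := card_mul_le_ncard_of_forall_le_ncard_fiber hfin List.head?
      fun ℓ => ncard_head_eq_le_of_map_mk_le φ (hmin ℓ) n
    rw [Fintype.card_prod, Fintype.card_bool, mul_comm (Fintype.card α)] at h
    exact_mod_cast h
  have hsplit : ({w ∈ nonnegReducedWords φ n | w.head? = some (letterInv a)}.ncard : ℝ) +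
      {w ∈ nonnegReducedWords φ n | w.head? ≠ some (letterInv a)}.ncard =
        (nonnegReducedWords φ n).ncard := by
    exact_mod_cast Set.ncard_inter_add_ncard_sdiff_eq_ncard (nonnegReducedWords φ n)
      {w | w.head? = some (letterInv a)} hfin
  have hpos : (0 : ℝ) < Fintype.card α := by
    exact_mod_cast Fintype.card_pos_iff.2 ⟨a.1⟩
  rw [div_mul_eq_mul_div, div_le_iff₀ (by positivity)]
  linear_combination hshare - 2 * (Fintype.card α : ℝ) * hsplit

end OrderedGroup

theorem sub_two_div_sub_one_le_sub_one_div {K : Type*} [Field K] [LinearOrder K]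
    [IsStrictOrderedRing K] {t : K} (ht : 1 < t) : (t - 2) / (t - 1) ≤ (t - 1) / t := by
  rw [div_le_div_iff₀ (sub_pos.2 ht) (one_pos.trans ht)]
  linear_combination zero_le_one (α := K)

theorem isReducedWord_iff_isReduced {m : ℕ} {w : List (Fin m × Bool)} :
    IsReducedWord w ↔ FreeGroup.IsReduced w :=
  FreeGroup.isReduced_iff_reduce_eq.symm

/-- Let `Ω` be the set of freely reduced words of length `k-1` with
nonnegative `φ`-value and let `Ω₁ ⊆ Ω` consist of the words whose initial letter is
different from `a⁻¹`, where `a` is a letter with maximal `φ`-value. Then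
`|Ω₁| ≥ ((2m-2)/(2m-1))·|Ω|`. -/
theorem omega_one_lower_bound (m k : ℕ) (hm : 2 ≤ m) (hk : 2 ≤ k)
    (φ : FreeGroup (Fin m) → ℤ)
    (hφ : ∀ x y : FreeGroup (Fin m), φ (x * y) = φ x + φ y)
    (hsurj : Function.Surjective φ)
    (a : Fin m × Bool)
    (ha : ∀ ℓ : Fin m × Bool, φ (FreeGroup.mk [ℓ]) ≤ φ (FreeGroup.mk [a])) :
    ((2 * (m : ℝ) - 2) / (2 * (m : ℝ) - 1)) *
        (Set.ncard {w : List (Fin m × Bool) |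
          w.length = k - 1 ∧ IsReducedWord w ∧ 0 ≤ φ (FreeGroup.mk w)} : ℝ) ≤
      (Set.ncard {w : List (Fin m × Bool) |
          (w.length = k - 1 ∧ IsReducedWord w ∧ 0 ≤ φ (FreeGroup.mk w)) ∧
          w.head? ≠ some (a.1, !a.2)} : ℝ) := by
  simp only [isReducedWord_iff_isReduced]
  have hbound := omega_one_lower_bound_general
    (MonoidHom.mk' (fun x => Multiplicative.ofAdd (φ x)) hφ) ha (k - 1)
  rw [Fintype.card_fin] at hbound
  exact (mul_le_mul_of_nonneg_right (sub_two_div_sub_one_le_sub_one_div (by norm_cast; omega))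
    (Nat.cast_nonneg _)).trans hbound
end

section
/- Let m ≥ 2, let F_m be a free group with free basis A of size m, let φ : F_m → ℤ be a surjective homomorphism, let a ∈ A ∪ A^{-1} be a letter with φ(a) maximal among all letters of A ∪ A^{-1}, and set C = φ(a). Let R be a normal subgroup of F_m contained in the kernel of φ, and let ρ = ρ(R) be the length of the shortest nontrivial element of R. If k ≥ 4 satisfies ρ ≥ Ck(2k-3) + 2k - 1, then the growth rate of the group F_m/R' with respect to the natural generators (the images of A) is at least (2m-1)·(4m(m-1)²/(2m-1)⁴)^{1/k}, where R' = [R,R] is the derived subgroup of R. -/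
open Filter Topology

/-- Evaluate a word over the alphabet `A^{±1}` (a letter is a pair `(i, b)`, where
`b = true` means the generator `σ i` and `b = false` means its inverse) in a group. -/
def wordEval {m : ℕ} {G : Type*} [Group G] (σ : Fin m → G)
    (w : List (Fin m × Bool)) : G :=
  (w.map fun ℓ => if ℓ.2 then σ ℓ.1 else (σ ℓ.1)⁻¹).prod

/-- The ball `B(n) = {g ∈ G : ℓ(g) ≤ n}` of radius `n` in a group with respect to the
generating map `σ`: the set of elements represented by words of length at most `n`. -/
def ball {m : ℕ} {G : Type*} [Group G] (σ : Fin m → G) (n : ℕ) : Set G :=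
  {g | ∃ w : List (Fin m × Bool), w.length ≤ n ∧ wordEval σ w = g}

/-- The growth rate `ω(G, A) = lim_{n→∞} |B(n)|^{1/n}`; the limit exists by
submultiplicativity of `|B(n)|`, hence equals the `limsup`. -/
noncomputable def growthRate {m : ℕ} {G : Type*} [Group G] (σ : Fin m → G) : ℝ :=
  Filter.limsup (fun n : ℕ => ((ball σ n).ncard : ℝ) ^ (1 / (n : ℝ))) Filter.atTop

/-!
Call a cyclically reduced word starting with `a` good if its height, i.e. its image under `φ`, is
positive. A cyclically reduced word starting with `a` has the form `aⁱ c aʲ` with `c` empty or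
beginning and ending in letters other than `a^{±1}`; replacing each letter of `c` by its inverse
makes the two heights add up to `2(i + j)φ(a) > 0`, so at least half of these words are good. It
then suffices to show that distinct products of `n` good words of length `k` remain distinct in
`F_m/R'`.

Consider two such products, beginning with `c x` and `c y` for letters `x ≠ y`. Every good factor
raises the height by at least `1`, so the height of a prefix bounds its length. A prefix `p` of
either product ending at the vertex `c y` of the Cayley graph of `F_m/R` has the height of `c y`, so
it is too short for `p⁻¹ c y ∈ R` to be nontrivial: `p = c y` in `F_m`. Hence the first path visits
that vertex never and the second exactly once, entering it along the edge `y`. By the Magnus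
embedding, the signed number of traversals of that edge is determined by the class modulo `R'`, so
the two products differ there.
-/

open FreeGroup (mk mul_mk inv_mk invRev one_eq_mk mk_toWord)

section Letters

variable {α : Type*} {a x : α × Bool} {u v w : List (α × Bool)}

/-- The formal inverse of a letter of `A ∪ A⁻¹`. -/
def invLetter (x : α × Bool) : α × Bool := (x.1, !x.2)

theorem invLetter_involutive : Function.Involutive (invLetter (α := α)) := fun x ↦ by
  simp [invLetter]

theorem invLetter_ne (x : α × Bool) : invLetter x ≠ x := fun h ↦
  Bool.not_ne_self _ (congrArg Prod.snd h)

theorem fst_eq_imp_snd_eq_iff {x y : α × Bool} :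
    (x.1 = y.1 → x.2 = y.2) ↔ y ≠ invLetter x := by
  obtain ⟨i, b⟩ := x
  obtain ⟨j, c⟩ := y
  cases b <;> cases c <;> simp [invLetter, eq_comm]

theorem ne_and_ne_invLetter_iff : x ≠ a ∧ x ≠ invLetter a ↔ x.1 ≠ a.1 := by
  obtain ⟨i, b⟩ := x
  obtain ⟨j, c⟩ := a
  cases b <;> cases c <;> simp [invLetter]

theorem isReduced_append_iff :
    FreeGroup.IsReduced (u ++ v) ↔
      FreeGroup.IsReduced u ∧ FreeGroup.IsReduced v ∧
        ∀ x ∈ u.getLast?, v.head? ≠ some (invLetter x) := by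
  simp only [FreeGroup.IsReduced, List.isChain_append, fst_eq_imp_snd_eq_iff]
  exact and_congr_right' <| and_congr_right' <| forall₂_congr fun x _ ↦
    ⟨fun h hv ↦ h _ hv rfl, fun h y hy hxy ↦ h (hxy ▸ hy)⟩

theorem isReduced_cons_iff :
    FreeGroup.IsReduced (x :: w) ↔ FreeGroup.IsReduced w ∧ w.head? ≠ some (invLetter x) := by
  simpa using isReduced_append_iff (u := [x]) (v := w)

theorem isReduced_replicate (n : ℕ) (a : α × Bool) :
    FreeGroup.IsReduced (List.replicate n a) := by
  simp [FreeGroup.IsReduced, List.isChain_replicate_of_rel]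

theorem isReduced_map_invLetter (hw : FreeGroup.IsReduced w) :
    FreeGroup.IsReduced (w.map invLetter) := by
  rw [FreeGroup.IsReduced, List.isChain_map]
  exact hw.imp fun x y h hxy ↦ congrArg not (h hxy)

theorem mk_singleton_invLetter (x : α × Bool) : mk [invLetter x] = (mk [x])⁻¹ := by
  simp [inv_mk, invRev, invLetter]

theorem mk_cons (x : α × Bool) (w : List (α × Bool)) : mk (x :: w) = mk [x] * mk w :=
  (mul_mk (L₁ := [x]) (L₂ := w)).symm

end Letters

section AdditiveMaps

variable {α A : Type*}

theorem map_mk_eq_sum [AddGroup A] {φ : FreeGroup α → A} (hφ : ∀ x y, φ (x * y) = φ x + φ y)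
    (w : List (α × Bool)) : φ (mk w) = (w.map fun x ↦ φ (mk [x])).sum := by
  induction w with
  | nil => simpa [one_eq_mk] using hφ 1 1
  | cons x w ih => rw [mk_cons, hφ, ih, List.map_cons, List.sum_cons]

theorem map_mk_append [AddGroup A] {φ : FreeGroup α → A} (hφ : ∀ x y, φ (x * y) = φ x + φ y)
    (u v : List (α × Bool)) : φ (mk (u ++ v)) = φ (mk u) + φ (mk v) := by
  rw [← mul_mk, hφ]

theorem map_mk_map_invLetter [AddCommGroup A] {φ : FreeGroup α → A}
    (hφ : ∀ x y, φ (x * y) = φ x + φ y) (w : List (α × Bool)) :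
    φ (mk (w.map invLetter)) = -φ (mk w) := by
  have map_one : φ 1 = 0 := by simpa using hφ 1 1
  have map_letter (x : α × Bool) : φ (mk [invLetter x]) = -φ (mk [x]) := by
    rw [mk_singleton_invLetter, eq_neg_iff_add_eq_zero, ← hφ, inv_mul_cancel, map_one]
  rw [map_mk_eq_sum hφ, map_mk_eq_sum hφ, List.map_map, List.sum_neg, List.map_map]
  simp [Function.comp_def, map_letter]

variable {φ : FreeGroup α → ℤ} (hφ : ∀ x y, φ (x * y) = φ x + φ y) {C : ℤ}
  (hC : ∀ x, φ (mk [x]) ≤ C)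

include hφ hC

theorem map_mk_le (w : List (α × Bool)) : φ (mk w) ≤ C * w.length := by
  rw [map_mk_eq_sum hφ, mul_comm, ← nsmul_eq_mul]
  simpa using List.sum_le_card_nsmul (w.map fun x ↦ φ (mk [x])) C
    (List.forall_mem_map.2 fun x _ ↦ hC x)

theorem neg_le_map_mk (w : List (α × Bool)) : -(C * w.length) ≤ φ (mk w) := by
  have h := map_mk_le hφ hC (w.map invLetter)
  rw [map_mk_map_invLetter hφ, List.length_map] at h
  linarith

theorem pos_of_forall_letter_le (hsurj : Function.Surjective φ) : 0 < C := by
  classical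
  obtain ⟨g, hg⟩ := hsurj 1
  have h := map_mk_le hφ hC g.toWord
  rw [mk_toWord, hg] at h
  exact pos_of_mul_pos_left (zero_lt_one.trans_le h) (by positivity)

end AdditiveMaps

section InvertCore

variable {α : Type*} {a : α × Bool} {w : List (α × Bool)}

theorem exists_eq_replicate_append {β : Type*} (b : β) (l : List β) :
    ∃ i c, l = List.replicate i b ++ c ∧ c.head? ≠ some b := by
  induction l with
  | nil => exact ⟨0, [], by simp⟩
  | cons x l ih =>
    by_cases hx : x = b
    · obtain ⟨i, c, rfl, hc⟩ := ih
      exact ⟨i + 1, c, by simp [hx, List.replicate_succ], hc⟩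
    · exact ⟨0, x :: l, by simpa using hx⟩

theorem exists_eq_replicate_append_append_replicate {β : Type*} (b : β) (l : List β) :
    ∃ i c j, l = List.replicate i b ++ c ++ List.replicate j b ∧
      c.head? ≠ some b ∧ c.getLast? ≠ some b := by
  obtain ⟨i, r, rfl, hr⟩ := exists_eq_replicate_append b l
  obtain ⟨j, c, hc, hcb⟩ := exists_eq_replicate_append b r.reverse
  obtain rfl : r = c.reverse ++ List.replicate j b := by
    simpa using congrArg List.reverse hc
  refine ⟨i, c.reverse, j, by simp, fun h ↦ hr ?_, by simpa using hcb⟩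
  rw [List.head?_append, h, Option.some_or]

theorem takeWhile_replicate_append {β : Type*} [DecidableEq β] {b : β} {c : List β}
    (hc : c.head? ≠ some b) (i : ℕ) :
    (List.replicate i b ++ c).takeWhile (· = b) = List.replicate i b := by
  rw [List.takeWhile_append_of_pos (by simp +contextual)]
  cases c <;> simp_all

theorem dropWhile_replicate_append {β : Type*} [DecidableEq β] {b : β} {c : List β}
    (hc : c.head? ≠ some b) (i : ℕ) :
    (List.replicate i b ++ c).dropWhile (· = b) = c := by
  rw [List.dropWhile_append_of_pos (by simp +contextual)]
  cases c <;> simp_all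

/-- Cyclically reduced words with first letter `a`. These are the good words without the
positivity condition. -/
def IsCyclicFrom (a : α × Bool) (w : List (α × Bool)) : Prop :=
  FreeGroup.IsReduced w ∧ w.head? = some a ∧ w.getLast? ≠ some (invLetter a)

/-- The possible shapes of what remains of a cyclically reduced word starting with `a`, other
than a power of `a`, once its leading and trailing `a`s are removed. -/
structure IsCore (a : α × Bool) (c : List (α × Bool)) : Prop where
  ne_nil : c ≠ []
  isReduced : FreeGroup.IsReduced c
  fst_head_ne : ∀ x ∈ c.head?, x.1 ≠ a.1
  fst_getLast_ne : ∀ x ∈ c.getLast?, x.1 ≠ a.1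

theorem IsCore.map_invLetter {c : List (α × Bool)} (hc : IsCore a c) :
    IsCore a (c.map invLetter) where
  ne_nil := by simpa using hc.ne_nil
  isReduced := isReduced_map_invLetter hc.isReduced
  fst_head_ne := by
    simp only [List.head?_map, Option.mem_map, forall_exists_index, and_imp,
      forall_apply_eq_imp_iff₂]
    exact hc.fst_head_ne
  fst_getLast_ne := by
    simp only [List.getLast?_map, Option.mem_map, forall_exists_index, and_imp,
      forall_apply_eq_imp_iff₂]
    exact hc.fst_getLast_ne

theorem IsCore.isCyclicFrom {c : List (α × Bool)} (hc : IsCore a c) (i j : ℕ) :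
    IsCyclicFrom a (List.replicate (i + 1) a ++ c ++ List.replicate j a) := by
  obtain ⟨hne, hred, hhead, hlast⟩ := hc
  have head_eq := List.head?_eq_some_head hne
  have last_eq := List.getLast?_eq_some_getLast hne
  have head_ne := ne_and_ne_invLetter_iff.2 (hhead _ head_eq)
  have last_ne := ne_and_ne_invLetter_iff.2 (hlast _ last_eq)
  refine ⟨?_, by simp [List.replicate_succ], ?_⟩
  · rw [isReduced_append_iff, isReduced_append_iff]
    refine ⟨⟨isReduced_replicate _ _, hred, ?_⟩, isReduced_replicate _ _, ?_⟩
    · simp [List.getLast?_replicate, head_eq, head_ne.2]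
    · simp [List.getLast?_append, List.head?_replicate, last_eq, ← invLetter_involutive.eq_iff,
        last_ne.2.symm]
  · rw [List.getLast?_append, List.getLast?_append, List.getLast?_replicate, last_eq]
    split_ifs <;> simp [last_ne.2, (invLetter_ne a).symm]

theorem IsCyclicFrom.eq_replicate_or_exists_isCore (hw : IsCyclicFrom a w) :
    (∃ n, w = List.replicate (n + 1) a) ∨
      ∃ i c j, IsCore a c ∧ w = List.replicate (i + 1) a ++ c ++ List.replicate j a := by
  obtain ⟨hred, hhead, hlast⟩ := hw
  obtain ⟨i, c, j, rfl, hch, hcl⟩ := exists_eq_replicate_append_append_replicate a w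
  obtain rfl | hne := eq_or_ne c []
  · have hij : i + j ≠ 0 := by
      rintro h
      obtain ⟨rfl, rfl⟩ := Nat.add_eq_zero_iff.1 h
      simp at hhead
    obtain ⟨n, hn⟩ := Nat.exists_eq_succ_of_ne_zero hij
    exact .inl ⟨n, by rw [List.append_nil, List.replicate_append_replicate, hn]⟩
  have head_eq := List.head?_eq_some_head hne
  obtain _ | i := i
  · simp_all
  rw [isReduced_append_iff, isReduced_append_iff] at hred
  obtain ⟨⟨-, hc, hic⟩, -, hcj⟩ := hred
  refine .inr ⟨i, c, j, ⟨hne, hc, fun x hx ↦ ?_, fun x hx ↦ ?_⟩, rfl⟩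
  · refine ne_and_ne_invLetter_iff.1 ⟨fun h ↦ hch (h ▸ hx), fun h ↦ hic a ?_ (h ▸ hx)⟩
    simp [List.getLast?_replicate]
  · refine ne_and_ne_invLetter_iff.1 ⟨fun h ↦ hcl (h ▸ hx), ?_⟩
    rintro rfl
    obtain _ | j := j
    · exact hlast (by simp [Option.mem_def.1 hx])
    · refine hcj (invLetter a) (by simp [Option.mem_def.1 hx]) ?_
      simp [invLetter_involutive a, List.replicate_succ]

variable [DecidableEq α]

/-- Invert every letter of a word outside its leading and trailing runs of `a`. -/
def invertCore (a : α × Bool) (w : List (α × Bool)) : List (α × Bool) :=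
  let v := w.dropWhile (· = a)
  w.takeWhile (· = a) ++ (v.rdropWhile (· = a)).map invLetter ++ v.rtakeWhile (· = a)

@[simp]
theorem length_invertCore (a : α × Bool) (w : List (α × Bool)) :
    (invertCore a w).length = w.length := by
  rw [invertCore, List.append_assoc, List.length_append, List.length_append, List.length_map,
    ← List.length_append, List.rdropWhile_append_rtakeWhile, ← List.length_append,
    List.takeWhile_append_dropWhile]

theorem invertCore_replicate (a : α × Bool) (n : ℕ) :
    invertCore a (List.replicate n a) = List.replicate n a := by
  simp [invertCore]

theorem IsCore.invertCore_eq {c : List (α × Bool)} (hc : IsCore a c) (i j : ℕ) :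
    invertCore a (List.replicate i a ++ c ++ List.replicate j a) =
      List.replicate i a ++ c.map invLetter ++ List.replicate j a := by
  have head_ne : c.head? ≠ some a := fun h ↦ hc.fst_head_ne a h rfl
  have last_ne : c.reverse.head? ≠ some a := fun h ↦ hc.fst_getLast_ne a (by simpa using h) rfl
  have head_ne' : (c ++ List.replicate j a).head? ≠ some a := by
    rwa [List.head?_append_of_ne_nil _ hc.ne_nil]
  simp [invertCore, List.rdropWhile, List.rtakeWhile, takeWhile_replicate_append head_ne',
    dropWhile_replicate_append head_ne', takeWhile_replicate_append last_ne,
    dropWhile_replicate_append last_ne]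

theorem isCyclicFrom_invertCore (hw : IsCyclicFrom a w) : IsCyclicFrom a (invertCore a w) := by
  obtain ⟨n, rfl⟩ | ⟨i, c, j, hc, rfl⟩ := hw.eq_replicate_or_exists_isCore
  · rwa [invertCore_replicate]
  · rw [hc.invertCore_eq]
    exact hc.map_invLetter.isCyclicFrom i j

theorem invertCore_invertCore (hw : IsCyclicFrom a w) :
    invertCore a (invertCore a w) = w := by
  obtain ⟨n, rfl⟩ | ⟨i, c, j, hc, rfl⟩ := hw.eq_replicate_or_exists_isCore
  · rw [invertCore_replicate, invertCore_replicate]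
  · rw [hc.invertCore_eq, hc.map_invLetter.invertCore_eq, List.map_map,
      invLetter_involutive.comp_self, List.map_id]

theorem map_mk_add_map_mk_invertCore_pos {φ : FreeGroup α → ℤ}
    (hφ : ∀ x y, φ (x * y) = φ x + φ y) (ha : 0 < φ (mk [a])) (hw : IsCyclicFrom a w) :
    0 < φ (mk w) + φ (mk (invertCore a w)) := by
  have map_replicate (n : ℕ) : φ (mk (List.replicate n a)) = n * φ (mk [a]) := by
    rw [map_mk_eq_sum hφ, List.map_replicate, List.sum_replicate, nsmul_eq_mul]
  obtain ⟨n, rfl⟩ | ⟨i, c, j, hc, rfl⟩ := hw.eq_replicate_or_exists_isCore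
  · rw [invertCore_replicate, map_replicate]
    positivity
  · rw [hc.invertCore_eq]
    simp only [map_mk_append hφ, map_mk_map_invLetter hφ, map_replicate]
    push_cast
    nlinarith

end InvertCore

section Counting

theorem ncard_mul_le_ncard_of_concat {β : Type*} {S S' : Set (List β)} {d : ℕ} (hS' : S'.Finite)
    (h : ∀ u ∈ S, d ≤ {x | u ++ [x] ∈ S'}.ncard) : S.ncard * d ≤ S'.ncard := by
  classical
  obtain hS | hS := S.finite_or_infinite; swap
  · simp [hS.ncard]
  lift S to Finset (List β) using hS
  lift S' to Finset (List β) using hS'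
  simp only [Set.ncard_coe_finset, Finset.mem_coe] at h ⊢
  have fiber_ge : ∀ u ∈ S, d ≤ ({w ∈ {w ∈ S' | w.dropLast ∈ S} | w.dropLast = u}).card := by
    intro u hu
    have concat_injOn : Set.InjOn (u ++ [·]) {x | u ++ [x] ∈ S'} := by simp [Set.InjOn]
    refine (h u hu).trans ?_
    rw [← concat_injOn.ncard_image, ← Set.ncard_coe_finset]
    refine Set.ncard_le_ncard ?_ (Finset.finite_toSet _)
    rintro _ ⟨x, hx, rfl⟩
    simpa [hu] using hx
  calc S.card * d = d * S.card := mul_comm _ _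
    _ ≤ ({w ∈ S' | w.dropLast ∈ S}).card :=
      Finset.mul_card_image_le_card_of_maps_to (by simp) d fiber_ge
    _ ≤ S'.card := Finset.card_filter_le _ _

theorem finite_setOf_and_length_eq {β : Type*} [Finite β] (p : List β → Prop) (n : ℕ) :
    {w | p w ∧ w.length = n}.Finite :=
  (List.finite_length_eq _ n).subset fun _ h ↦ h.2

variable {α : Type*}

theorem pow_le_ncard_isReduced [Fintype α] (a : α × Bool) (n : ℕ) :
    (2 * Fintype.card α - 1) ^ n ≤
      {w | (FreeGroup.IsReduced w ∧ w.head? = some a) ∧ w.length = n + 1}.ncard := by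
  induction n with
  | zero =>
    rw [pow_zero, Nat.one_le_iff_ne_zero, ← Nat.pos_iff_ne_zero,
      Set.ncard_pos (finite_setOf_and_length_eq _ _)]
    exact ⟨[a], by simp⟩
  | succ n ih =>
    rw [pow_succ]
    refine (Nat.mul_le_mul_right _ ih).trans <| ncard_mul_le_ncard_of_concat
      (finite_setOf_and_length_eq _ _) ?_
    rintro u ⟨⟨hu, hhead⟩, hlen⟩
    have hne : u ≠ [] := by rintro rfl; simp at hlen
    have subset : {invLetter (u.getLast hne)}ᶜ ⊆
        {x | (FreeGroup.IsReduced (u ++ [x]) ∧ (u ++ [x]).head? = some a) ∧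
          (u ++ [x]).length = n + 1 + 1} := fun x hx ↦ by
      simp_all [isReduced_append_iff, List.getLast?_eq_some_getLast hne]
    refine le_trans ?_ (Set.ncard_le_ncard subset)
    rw [Set.ncard_compl, Set.ncard_singleton, Nat.card_eq_fintype_card, Fintype.card_prod,
      Fintype.card_bool, mul_comm]

theorem pow_mul_le_ncard_isCyclicFrom [Fintype α] (a : α × Bool) (n : ℕ) :
    (2 * Fintype.card α - 1) ^ n * (2 * Fintype.card α - 2) ≤
      {w | IsCyclicFrom a w ∧ w.length = n + 2}.ncard := by
  refine (Nat.mul_le_mul_right _ (pow_le_ncard_isReduced a n)).trans <|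
    ncard_mul_le_ncard_of_concat (finite_setOf_and_length_eq _ _) ?_
  rintro u ⟨⟨hu, hhead⟩, hlen⟩
  have hne : u ≠ [] := by rintro rfl; simp at hlen
  have subset : {invLetter (u.getLast hne), invLetter a}ᶜ ⊆
      {x | IsCyclicFrom a (u ++ [x]) ∧ (u ++ [x]).length = n + 2} := fun x hx ↦ by
    simp_all [isReduced_append_iff, List.getLast?_eq_some_getLast hne, IsCyclicFrom]
  refine le_trans ?_ (Set.ncard_le_ncard subset)
  have := Set.ncard_insert_le (invLetter (u.getLast hne)) {invLetter a}
  rw [Set.ncard_singleton] at this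
  rw [Set.ncard_compl, Nat.card_eq_fintype_card, Fintype.card_prod, Fintype.card_bool]
  omega

/-- The words of length `k` satisfying `IsGoodWord`, over an arbitrary alphabet. -/
def goodWords (φ : FreeGroup α → ℤ) (a : α × Bool) (k : ℕ) : Set (List (α × Bool)) :=
  {w | (IsCyclicFrom a w ∧ 0 < φ (mk w)) ∧ w.length = k}

theorem ncard_isCyclicFrom_le_two_mul [Finite α] {a : α × Bool} {φ : FreeGroup α → ℤ}
    (hφ : ∀ x y, φ (x * y) = φ x + φ y) (ha : 0 < φ (mk [a])) (n : ℕ) :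
    {w | IsCyclicFrom a w ∧ w.length = n}.ncard ≤
      2 * (goodWords φ a n).ncard := by
  classical
  set S := {w | IsCyclicFrom a w ∧ w.length = n}
  set P := goodWords φ a n
  have P_finite : P.Finite := finite_setOf_and_length_eq _ _
  have maps_to : ∀ w ∈ S \ P, invertCore a w ∈ P := fun w hw ↦ by
    have := map_mk_add_map_mk_invertCore_pos hφ ha hw.1.1
    have : ¬ 0 < φ (mk w) := fun h ↦ hw.2 ⟨⟨hw.1.1, h⟩, hw.1.2⟩
    exact ⟨⟨isCyclicFrom_invertCore hw.1.1, by omega⟩, by rw [length_invertCore, hw.1.2]⟩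
  have inj : Set.InjOn (invertCore a) (S \ P) := fun v hv w hw h ↦ by
    rw [← invertCore_invertCore hv.1.1, h, invertCore_invertCore hw.1.1]
  have sdiff_le : (S \ P).ncard ≤ P.ncard := Set.ncard_le_ncard_of_injOn _ maps_to inj P_finite
  calc S.ncard ≤ (S \ P).ncard + P.ncard := Set.ncard_le_ncard_sdiff_add_ncard S P P_finite
    _ ≤ 2 * P.ncard := by omega

theorem pow_mul_le_ncard_goodWords [Fintype α] {a : α × Bool} {φ : FreeGroup α → ℤ}
    (hφ : ∀ x y, φ (x * y) = φ x + φ y) (ha : 0 < φ (mk [a])) (n : ℕ) :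
    (2 * Fintype.card α - 1) ^ n * (Fintype.card α - 1) ≤
      (goodWords φ a (n + 2)).ncard := by
  refine Nat.le_of_mul_le_mul_left ?_ two_pos
  calc 2 * ((2 * Fintype.card α - 1) ^ n * (Fintype.card α - 1))
      = (2 * Fintype.card α - 1) ^ n * (2 * Fintype.card α - 2) := by
        rw [mul_left_comm, Nat.mul_sub_one]
    _ ≤ _ := pow_mul_le_ncard_isCyclicFrom a n
    _ ≤ _ := ncard_isCyclicFrom_le_two_mul hφ ha _

end Counting

section Inflow

variable {α Q : Type*} [Group Q] (π : FreeGroup α →* Q) (y : α × Bool)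

open scoped Classical in
/-- The signed number of times the letter `x`, read from the vertex `1` of the Cayley graph of `Q`
with edges `q → q * π y`, enters the vertex `q` along the edge labelled `y`. Leaving `q` through
that edge, i.e. reading `y⁻¹` at `q`, counts as `-1`. -/
noncomputable def letterInflow (x : α × Bool) (q : Q) : ℤ :=
  (if x = y ∧ q = π (mk [x]) then 1 else 0) - if x = invLetter y ∧ q = 1 then 1 else 0

variable {π y} in
theorem letterInflow_eq_zero {x : α × Bool} {q : Q} (hq : q ≠ π (mk [x]))
    (hx : q = 1 → x ≠ invLetter y) : letterInflow π y x q = 0 := by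
  rw [letterInflow, if_neg (fun h ↦ hq h.2), if_neg (fun h ↦ hx h.2 h.1), sub_zero]

theorem letterInflow_self : letterInflow π y y (π (mk [y])) = 1 := by
  rw [letterInflow, if_pos ⟨rfl, rfl⟩, if_neg (fun h ↦ invLetter_ne y h.1.symm), sub_zero]

theorem letterInflow_invLetter (x : α × Bool) (q : Q) :
    letterInflow π y (invLetter x) q = -letterInflow π y x (π (mk [x]) * q) := by
  classical
  simp only [letterInflow, mk_singleton_invLetter, map_inv, mul_eq_left, mul_eq_one_iff_eq_inv',
    invLetter_involutive.injective.eq_iff, invLetter_involutive.eq_iff (y := y), neg_sub]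

/-- The Magnus embedding, with the coordinates of the base group indexed by the vertices and
only the `y`-labelled edge into each vertex retained. -/
noncomputable def inflowHom : FreeGroup α →* RegularWreathProduct (Multiplicative ℤ) Q :=
  FreeGroup.lift fun j ↦
    ⟨fun q ↦ .ofAdd (letterInflow π y (j, true) q), π (FreeGroup.of j)⟩

theorem inflowHom_right (g : FreeGroup α) : (inflowHom π y g).right = π g := by
  have : RegularWreathProduct.rightHom.comp (inflowHom π y) = π := by
    ext j
    simp [inflowHom]
  exact DFunLike.congr_fun this g

/-- The signed number of times a path from `1` in the Cayley graph, labelled by a word for `g`,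
enters the vertex `q` along the edge labelled `y`. -/
noncomputable def inflow (g : FreeGroup α) (q : Q) : ℤ :=
  ((inflowHom π y g).left q).toAdd

theorem inflow_one (q : Q) : inflow π y 1 q = 0 := by simp [inflow]

theorem inflow_mul (g h : FreeGroup α) (q : Q) :
    inflow π y (g * h) q = inflow π y g q + inflow π y h ((π g)⁻¹ * q) := by
  simp [inflow, inflowHom_right]

theorem inflow_mk_singleton (x : α × Bool) (q : Q) :
    inflow π y (mk [x]) q = letterInflow π y x q := by
  have inflow_of (j : α) (q : Q) :
      inflow π y (FreeGroup.of j) q = letterInflow π y (j, true) q := by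
    simp [inflow, inflowHom]
  obtain ⟨j, _ | _⟩ := x
  · have inflow_cancel :=
      inflow_mul π y (FreeGroup.of j) (FreeGroup.of j)⁻¹ (π (FreeGroup.of j) * q)
    rw [mul_inv_cancel, inflow_one, inflow_of, inv_mul_cancel_left] at inflow_cancel
    calc inflow π y (mk [(j, false)]) q = inflow π y (FreeGroup.of j)⁻¹ q := by
          rw [FreeGroup.of, ← mk_singleton_invLetter, invLetter, Bool.not_true]
      _ = -letterInflow π y (j, true) (π (FreeGroup.of j) * q) :=
        (neg_eq_of_add_eq_zero_right inflow_cancel.symm).symm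
      _ = letterInflow π y (j, false) q := (letterInflow_invLetter π y (j, true) q).symm
  · exact inflow_of j q

theorem mul_comm_of_right_eq_one {D : Type*} [CommGroup D] {g h : RegularWreathProduct D Q}
    (hg : g.right = 1) (hh : h.right = 1) : g * h = h * g := by
  ext <;> simp [hg, hh, mul_comm]

theorem inflow_eq_of_inv_mul_mem {g h : FreeGroup α} (hgh : g⁻¹ * h ∈ ⁅π.ker, π.ker⁆) (q : Q) :
    inflow π y g q = inflow π y h q := by
  have commutator_le : ⁅π.ker, π.ker⁆ ≤ (inflowHom π y).ker := by
    refine Subgroup.commutator_le.2 fun r hr s hs ↦ ?_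
    rw [MonoidHom.mem_ker, map_commutatorElement, commutatorElement_eq_one_iff_mul_comm]
    exact mul_comm_of_right_eq_one (by rwa [inflowHom_right]) (by rwa [inflowHom_right])
  have map_eq : inflowHom π y g = inflowHom π y h := by
    rw [← inv_mul_eq_one, ← map_inv, ← map_mul]
    exact commutator_le hgh
  rw [inflow, inflow, map_eq]

variable {π y}

theorem inflow_mk_eq_zero {w : List (α × Bool)} {q : Q} (hq : q = 1 → w.head? ≠ some (invLetter y))
    (hw : ∀ p, p <+: w → p ≠ [] → π (mk p) ≠ q) : inflow π y (mk w) q = 0 := by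
  induction w generalizing q with
  | nil => exact inflow_one π y q
  | cons x w ih =>
    have hx : q ≠ π (mk [x]) := (hw [x] (by simp) (by simp)).symm
    rw [mk_cons, inflow_mul, inflow_mk_singleton, letterInflow_eq_zero hx (by simpa using hq),
      zero_add]
    refine ih (fun h ↦ absurd (inv_mul_eq_one.1 h).symm hx) fun p hp _ h ↦ ?_
    refine hw (x :: p) (by simpa using hp) (by simp) ?_
    rw [mk_cons, map_mul, h, mul_inv_cancel_left]

theorem inflow_mk_eq_zero_of_forall_prefix_ne {w : List (α × Bool)} {q : Q}
    (hw : ∀ p, p <+: w → π (mk p) ≠ q) : inflow π y (mk w) q = 0 :=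
  inflow_mk_eq_zero (fun hq ↦ absurd ((map_one π).trans hq.symm) (hw [] List.nil_prefix))
    fun p hp _ ↦ hw p hp

/-- The first path enters the vertex `π (mk (c ++ [y]))` once, through `y`, and does not leave it
through the same edge; so its inflow there is `1`, whereas that of the second path is `0`. -/
theorem inv_mk_mul_mk_notMem_commutator_ker {c v w : List (α × Bool)}
    (hy : v.head? ≠ some (invLetter y))
    (hv : ∀ p, p <+: c ++ y :: v → π (mk p) = π (mk (c ++ [y])) → p = c ++ [y])
    (hw : ∀ p, p <+: w → π (mk p) ≠ π (mk (c ++ [y]))) :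
    (mk (c ++ y :: v))⁻¹ * mk w ∉ ⁅π.ker, π.ker⁆ := by
  intro hmem
  have mk_concat : mk (c ++ [y]) = mk c * mk [y] := mul_mk.symm
  have inflow_c : inflow π y (mk c) (π (mk (c ++ [y]))) = 0 := by
    refine inflow_mk_eq_zero_of_forall_prefix_ne fun p hp h ↦ ?_
    simpa [hv p (hp.trans (List.prefix_append _ _)) h] using hp.length_le
  have inflow_v : inflow π y (mk v) 1 = 0 := by
    refine inflow_mk_eq_zero (fun _ ↦ hy) fun p hp hne h ↦ hne ?_
    have := hv (c ++ y :: p) (by simpa using hp) (by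
      rw [← mul_mk, mk_cons, ← mul_assoc, ← mk_concat, map_mul, h, mul_one])
    simpa using this
  have inflow_eq_one : inflow π y (mk (c ++ y :: v)) (π (mk (c ++ [y]))) = 1 := by
    rw [← mul_mk, mk_cons, inflow_mul, inflow_c, mk_concat, map_mul, inv_mul_cancel_left,
      inflow_mul, inflow_mk_singleton, letterInflow_self, inv_mul_cancel, inflow_v, zero_add,
      add_zero]
  have inflow_eq := inflow_eq_of_inv_mul_mem π y hmem (π (mk (c ++ [y])))
  rw [inflow_eq_one, inflow_mk_eq_zero_of_forall_prefix_ne hw] at inflow_eq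
  exact one_ne_zero inflow_eq

end Inflow

section FlattenedWords

theorem exists_eq_append_cons_of_length_eq {β : Type*} {w v : List β} (hlen : w.length = v.length)
    (hne : w ≠ v) : ∃ c x y w' v', w = c ++ x :: w' ∧ v = c ++ y :: v' ∧ x ≠ y := by
  induction w generalizing v with
  | nil => exact absurd (List.length_eq_zero_iff.1 hlen.symm).symm hne
  | cons z w ih =>
    obtain ⟨t, v, rfl⟩ := List.exists_cons_of_length_eq_add_one hlen.symm
    obtain rfl | hzt := eq_or_ne z t
    · obtain ⟨c, x, y, w', v', rfl, rfl, hxy⟩ := ih (by simpa using hlen) (by simpa using hne)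
      exact ⟨z :: c, x, y, w', v', rfl, rfl, hxy⟩
    · exact ⟨[], z, t, w, v, rfl, rfl, hzt⟩

theorem head?_eq_some_of_prefix {β : Type*} {p l : List β} {x : β} (hpl : p <+: l)
    (hx : p.head? = some x) : l.head? = some x := by
  obtain ⟨t, rfl⟩ := hpl
  rw [List.head?_append, hx, Option.some_or]

theorem eq_of_head?_flatten_eq_some {β : Type*} {L : List (List β)} {b x : β}
    (hL : ∀ l ∈ L, l.head? = some b) (hx : L.flatten.head? = some x) : x = b := by
  rw [List.head?_flatten] at hx
  obtain ⟨l, hl, hlx⟩ := List.exists_of_findSome?_eq_some hx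
  exact Option.some_injective _ (hlx.symm.trans (hL l hl))

variable {α : Type*} {a : α × Bool} {ws : List (List (α × Bool))}

theorem isReduced_flatten (hws : ∀ w ∈ ws, IsCyclicFrom a w) : FreeGroup.IsReduced ws.flatten := by
  induction ws with
  | nil => exact .nil
  | cons w ws ih =>
    rw [List.forall_mem_cons] at hws
    refine isReduced_append_iff.2 ⟨hws.1.1, ih hws.2, fun x hx h ↦ ?_⟩
    have hxa : invLetter x = a := eq_of_head?_flatten_eq_some (fun u hu ↦ (hws.2 u hu).2.1) h
    exact hws.1.2.2 (by rwa [← hxa, invLetter_involutive x])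

end FlattenedWords

section Height

variable {α : Type*} {φ : FreeGroup α → ℤ} {a : α × Bool} {k : ℕ}
  {p : List (α × Bool)} {ws : List (List (α × Bool))}
  (hφ : ∀ x y, φ (x * y) = φ x + φ y) (hpos : 0 < φ (mk [a]))
  (ha : ∀ x, φ (mk [x]) ≤ φ (mk [a]))

include hφ hpos ha

theorem map_mk_add_nonneg (hk : 3 ≤ k) (hp : ∀ x, p.head? = some x → x = a) (hlen : p.length < k) :
    0 ≤ φ (mk p) + (k - 3) * φ (mk [a]) := by
  have hk' : (3 : ℤ) ≤ k := by exact_mod_cast hk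
  cases p with
  | nil =>
    rw [map_mk_eq_sum hφ]
    simpa using mul_nonneg (sub_nonneg.2 hk') hpos.le
  | cons x p =>
    obtain rfl : x = a := by simpa using hp
    have hlen' : (p.length : ℤ) ≤ k - 2 := by
      rw [List.length_cons] at hlen
      omega
    -- The letter `a` makes up for one of the at most `k - 2` others, each of height `≥ -φ(a)`.
    have tail_ge := neg_le_map_mk hφ ha p
    rw [mk_cons, hφ]
    nlinarith

theorem length_add_one_le_of_prefix_flatten (hk : 3 ≤ k)
    (hws : ∀ w ∈ ws, w ∈ goodWords φ a k) (hp : p <+: ws.flatten) :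
    (p.length : ℤ) + 1 ≤ k * (φ (mk p) + (k - 3) * φ (mk [a]) + 1) := by
  induction ws generalizing p with
  | nil =>
    obtain rfl := List.prefix_nil.1 hp
    have := map_mk_add_nonneg hφ hpos ha hk (p := []) (by simp) (by rw [List.length_nil]; omega)
    have : (3 : ℤ) ≤ k := by exact_mod_cast hk
    rw [List.length_nil, Nat.cast_zero]
    nlinarith
  | cons w ws ih =>
    rw [List.forall_mem_cons] at hws
    obtain ⟨⟨⟨⟨-, hhead, -⟩, hw⟩, hlen⟩, hws⟩ := hws
    rw [List.flatten_cons] at hp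
    by_cases hwp : w <+: p
    · obtain ⟨p, rfl⟩ := hwp
      have := ih hws ((List.prefix_append_right_inj w).1 hp)
      rw [map_mk_append hφ, List.length_append, hlen]
      push_cast
      nlinarith
    · have hpw : p <+: w :=
        (List.prefix_or_prefix_of_prefix hp (List.prefix_append w _)).resolve_right hwp
      have hlt : p.length < k := by
        refine hlen ▸ hpw.length_le.lt_of_ne fun h ↦ hwp ?_
        rw [hpw.eq_of_length h]
      have head_eq (x) (hx : p.head? = some x) : x = a :=
        Option.some_injective _ ((head?_eq_some_of_prefix hpw hx).symm.trans hhead)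
      have := map_mk_add_nonneg hφ hpos ha hk head_eq hlt
      have : (p.length : ℤ) + 1 ≤ k := by exact_mod_cast hlt
      nlinarith

end Height

section Injectivity

variable {α : Type*} [DecidableEq α] {a : α × Bool} {p d : List (α × Bool)}

theorem norm_inv_mk_mul_mk_le (p d : List (α × Bool)) :
    ((mk p)⁻¹ * mk d).norm ≤ p.length + d.length :=
  calc ((mk p)⁻¹ * mk d).norm ≤ (mk p)⁻¹.norm + (mk d).norm := FreeGroup.norm_mul_le _ _
    _ ≤ p.length + d.length := by
      rw [FreeGroup.norm_inv_eq]
      exact add_le_add FreeGroup.norm_mk_le FreeGroup.norm_mk_le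

theorem norm_inv_mk_mul_mk_add_two_le (hp : p.head? = some a) (hd : d.head? = some a) :
    ((mk p)⁻¹ * mk d).norm + 2 ≤ p.length + d.length := by
  obtain ⟨p, rfl⟩ := List.head?_eq_some_iff.1 hp
  obtain ⟨d, rfl⟩ := List.head?_eq_some_iff.1 hd
  have cancel : (mk (a :: p))⁻¹ * mk (a :: d) = (mk p)⁻¹ * mk d := by
    rw [mk_cons a p, mk_cons a d, mul_inv_rev, mul_assoc, inv_mul_cancel_left]
  have := norm_inv_mk_mul_mk_le p d
  rw [cancel, List.length_cons, List.length_cons]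
  omega

variable {φ : FreeGroup α → ℤ} {k : ℕ} {ws vs : List (List (α × Bool))}
  (hk : 3 ≤ k) (hφ : ∀ x y, φ (x * y) = φ x + φ y) (hpos : 0 < φ (mk [a]))
  (ha : ∀ x, φ (mk [x]) ≤ φ (mk [a])) {R : Subgroup (FreeGroup α)} (hker : ∀ g ∈ R, φ g = 0)
  (hρ : ∀ g ∈ R, g ≠ 1 → φ (mk [a]) * k * (2 * (k : ℤ) - 3) + 2 * k - 1 ≤ g.norm)

include hk hφ hpos ha hker hρ

theorem eq_of_prefix_flatten_of_inv_mul_mem (hws : ∀ w ∈ ws, w ∈ goodWords φ a k)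
    (hp : p <+: ws.flatten) (hd : FreeGroup.IsReduced d) (hda : d.head? = some a)
    (hdk : d.length ≤ k) (hmem : (mk p)⁻¹ * mk d ∈ R) : p = d := by
  by_contra hne
  have : (3 : ℤ) ≤ k := by exact_mod_cast hk
  have hdk' : (d.length : ℤ) ≤ k := by exact_mod_cast hdk
  have p_reduced : FreeGroup.IsReduced p :=
    (isReduced_flatten fun w hw ↦ (hws w hw).1.1).infix hp.isInfix
  have norm_ge := hρ _ hmem fun h ↦ hne <| by
    rw [← p_reduced.reduce_eq, ← hd.reduce_eq, FreeGroup.reduce.sound (inv_mul_eq_one.1 h)]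
  obtain rfl | hp_ne := eq_or_ne p []
  · have norm_le : (((mk [])⁻¹ * mk d).norm : ℤ) ≤ d.length := by
      exact_mod_cast by simpa using norm_inv_mk_mul_mk_le [] d
    have : 0 ≤ φ (mk [a]) * k * (2 * (k : ℤ) - 3) :=
      mul_nonneg (by positivity) (by linarith)
    linarith
  have hpa : p.head? = some a := by
    have head_eq := List.head?_eq_some_head hp_ne
    rw [head_eq, eq_of_head?_flatten_eq_some (fun w hw ↦ (hws w hw).1.1.2.1)
      (head?_eq_some_of_prefix hp head_eq)]
  have norm_le : (((mk p)⁻¹ * mk d).norm : ℤ) + 2 ≤ p.length + d.length := by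
    exact_mod_cast norm_inv_mk_mul_mk_add_two_le hpa hda
  have map_p_le : φ (mk p) ≤ φ (mk [a]) * k :=
    calc φ (mk p) = φ (mk p) + φ ((mk p)⁻¹ * mk d) := by rw [hker _ hmem, add_zero]
      _ = φ (mk d) := by rw [← hφ, mul_inv_cancel_left]
      _ ≤ φ (mk [a]) * d.length := map_mk_le hφ ha d
      _ ≤ φ (mk [a]) * k := by gcongr
  have length_le : (p.length : ℤ) + 1 ≤ k * (φ (mk [a]) * k + (k - 3) * φ (mk [a]) + 1) :=
    (length_add_one_le_of_prefix_flatten hφ hpos ha hk hws hp).trans (by gcongr)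
  linarith

theorem inv_mk_flatten_mul_mk_flatten_notMem_commutator [R.Normal] {w v : List (α × Bool)}
    (hws : ∀ u ∈ w :: ws, u ∈ goodWords φ a k) (hvs : ∀ u ∈ v :: vs, u ∈ goodWords φ a k)
    (hwv : w ≠ v) : (mk (v :: vs).flatten)⁻¹ * mk (w :: ws).flatten ∉ ⁅R, R⁆ := by
  intro hmem
  obtain ⟨⟨⟨-, hwa, -⟩, -⟩, hwk⟩ := hws w (by simp)
  obtain ⟨⟨⟨hv, hva, -⟩, -⟩, hvk⟩ := hvs v (by simp)
  obtain ⟨c, x, y, w', v', rfl, rfl, hxy⟩ :=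
    exists_eq_append_cons_of_length_eq (hwk.trans hvk.symm) hwv
  have hva : (c ++ [y]).head? = some a := by
    cases c with
    | nil => exact absurd (Option.some_injective _ (hwa.trans hva.symm)) hxy
    | cons z c => exact hva
  have V_eq : ((c ++ y :: v') :: vs).flatten = c ++ y :: (v' ++ vs.flatten) := by simp
  have W_eq : ((c ++ x :: w') :: ws).flatten = c ++ x :: (w' ++ ws.flatten) := by simp
  have V_reduced := isReduced_flatten fun u hu ↦ (hvs u hu).1.1
  rw [V_eq, isReduced_append_iff, isReduced_cons_iff] at V_reduced
  have hyk : (c ++ [y]).length ≤ k := by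
    simp only [← hvk, List.length_append, List.length_cons, List.length_nil]
    omega
  have eq_of_mem {us p} (hus : ∀ u ∈ us, u ∈ goodWords φ a k) (hp : p <+: us.flatten)
      (h : QuotientGroup.mk' R (mk p) = QuotientGroup.mk' R (mk (c ++ [y]))) : p = c ++ [y] :=
    eq_of_prefix_flatten_of_inv_mul_mem hk hφ hpos ha hker hρ hus hp
      (hv.infix ⟨[], v', by simp⟩) hva hyk (QuotientGroup.eq.1 h)
  refine inv_mk_mul_mk_notMem_commutator_ker (π := QuotientGroup.mk' R) (y := y)
    V_reduced.2.1.2 (fun p hp ↦ eq_of_mem hvs (V_eq ▸ hp)) (fun p hp h ↦ ?_)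
    (w := c ++ x :: (w' ++ ws.flatten)) ?_
  · have := eq_of_mem hws (W_eq ▸ hp) h
    subst this
    rw [List.prefix_append_right_inj, List.cons_prefix_cons] at hp
    exact hxy hp.1.symm
  · rwa [QuotientGroup.ker_mk', ← V_eq, ← W_eq]

theorem eq_of_inv_mk_flatten_mul_mem_commutator [R.Normal]
    (hws : ∀ w ∈ ws, w ∈ goodWords φ a k) (hvs : ∀ w ∈ vs, w ∈ goodWords φ a k)
    (hlen : ws.length = vs.length) (hmem : (mk vs.flatten)⁻¹ * mk ws.flatten ∈ ⁅R, R⁆) :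
    ws = vs := by
  induction ws generalizing vs with
  | nil => exact (List.length_eq_zero_iff.1 hlen.symm).symm
  | cons w ws ih =>
    obtain ⟨v, vs, rfl⟩ := List.exists_cons_of_length_eq_add_one hlen.symm
    obtain rfl | hwv := eq_or_ne w v
    · rw [List.flatten_cons, List.flatten_cons, ← mul_mk, ← mul_mk, mul_inv_rev, mul_assoc,
        inv_mul_cancel_left] at hmem
      rw [ih (List.forall_mem_cons.1 hws).2 (List.forall_mem_cons.1 hvs).2 (by simpa using hlen)
        hmem]
    · exact absurd hmem <|
        inv_mk_flatten_mul_mk_flatten_notMem_commutator hk hφ hpos ha hker hρ hws hvs hwv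

end Injectivity

section Growth

open scoped Pointwise in
theorem finite_ball_and_ncard_ball_le {m : ℕ} {G : Type*} [Group G] (σ : Fin m → G) (n : ℕ) :
    (ball σ n).Finite ∧ (ball σ n).ncard ≤ (2 * m + 1) ^ n := by
  classical
  let letter (x : Fin m × Bool) : G := if x.2 then σ x.1 else (σ x.1)⁻¹
  let S : Finset G := insert 1 (Finset.univ.image letter)
  have wordEval_mem (w : List (Fin m × Bool)) : wordEval σ w ∈ S ^ w.length := by
    induction w with
    | nil => simp [wordEval]
    | cons x w ih =>
      rw [List.length_cons, pow_succ']
      exact Finset.mul_mem_mul (by simp [S, letter]) ih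
  have ball_subset : ball σ n ⊆ ↑(S ^ n) := by
    rintro _ ⟨w, hw, rfl⟩
    exact Finset.pow_subset_pow_right (Finset.mem_insert_self _ _) hw (wordEval_mem w)
  refine ⟨(Finset.finite_toSet _).subset ball_subset, ?_⟩
  calc (ball σ n).ncard ≤ (S ^ n).card := by
        simpa only [Set.ncard_coe_finset] using
          Set.ncard_le_ncard ball_subset (Finset.finite_toSet _)
    _ ≤ S.card ^ n := Finset.card_pow_le
    _ ≤ (2 * m + 1) ^ n := by
      gcongr
      refine (Finset.card_insert_le _ _).trans (Nat.succ_le_succ ?_)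
      simpa [mul_comm] using Finset.card_image_le (f := letter) (s := Finset.univ)

theorem ncard_ball_rpow_le {m : ℕ} {G : Type*} [Group G] (σ : Fin m → G) (n : ℕ) :
    ((ball σ n).ncard : ℝ) ^ (1 / (n : ℝ)) ≤ 2 * m + 1 := by
  obtain rfl | hn := eq_or_ne n 0
  · simp
  calc ((ball σ n).ncard : ℝ) ^ (1 / (n : ℝ)) ≤ ((2 * m + 1 : ℝ) ^ n) ^ (1 / (n : ℝ)) := by
        gcongr
        exact_mod_cast (finite_ball_and_ncard_ball_le σ n).2
    _ = 2 * m + 1 := by rw [one_div, Real.pow_rpow_inv_natCast (by positivity) hn]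

theorem rpow_le_growthRate {m : ℕ} {G : Type*} [Group G] {σ : Fin m → G} {k N : ℕ} (hk : k ≠ 0)
    (h : ∀ n, N ^ n ≤ (ball σ (n * k)).ncard) : (N : ℝ) ^ (1 / (k : ℝ)) ≤ growthRate σ := by
  refine le_limsup_of_frequently_le (frequently_atTop.2 fun n ↦ ?_)
    (isBoundedUnder_of ⟨2 * m + 1, ncard_ball_rpow_le σ⟩)
  refine ⟨(n + 1) * k, by nlinarith [Nat.pos_of_ne_zero hk], ?_⟩
  calc (N : ℝ) ^ (1 / (k : ℝ)) = ((N : ℝ) ^ (n + 1)) ^ (1 / (((n + 1) * k : ℕ) : ℝ)) := by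
        rw [Nat.cast_mul, one_div, one_div, mul_inv, Real.rpow_mul (by positivity),
          Real.pow_rpow_inv_natCast (by positivity) n.succ_ne_zero]
    _ ≤ ((ball σ ((n + 1) * k)).ncard : ℝ) ^ (1 / (((n + 1) * k : ℕ) : ℝ)) := by
      gcongr
      exact_mod_cast h (n + 1)

theorem ncard_pow_le_ncard_ball {m : ℕ} {G : Type*} [Group G] {σ : Fin m → G}
    {S : Set (List (Fin m × Bool))} {k : ℕ} (hS : ∀ w ∈ S, w.length = k)
    (hinj : ∀ ws vs : List (List (Fin m × Bool)), (∀ w ∈ ws, w ∈ S) → (∀ v ∈ vs, v ∈ S) →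
      ws.length = vs.length → wordEval σ ws.flatten = wordEval σ vs.flatten → ws = vs) (n : ℕ) :
    S.ncard ^ n ≤ (ball σ (n * k)).ncard := by
  let words (f : Fin n → S) : List (List (Fin m × Bool)) := List.ofFn fun i ↦ (f i).1
  have words_mem (f : Fin n → S) : ∀ w ∈ words f, w ∈ S :=
    List.forall_mem_ofFn_iff.2 fun i ↦ (f i).2
  have mem_ball (f : Fin n → S) : wordEval σ (words f).flatten ∈ ball σ (n * k) := by
    refine ⟨_, le_of_eq ?_, rfl⟩
    simp [words, List.length_flatten, List.map_ofFn, List.sum_ofFn, hS _ (f _).2]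
  have words_inj (f g : Fin n → S)
      (h : wordEval σ (words f).flatten = wordEval σ (words g).flatten) : f = g := by
    have := hinj _ _ (words_mem f) (words_mem g) (by simp [words]) h
    exact funext fun i ↦ Subtype.ext (congrFun (List.ofFn_injective this) i)
  have : Finite (ball σ (n * k)) := (finite_ball_and_ncard_ball_le σ (n * k)).1
  calc S.ncard ^ n = Nat.card (Fin n → S) := by
        rw [Nat.card_fun, Nat.card_coe_set_eq, Nat.card_fin]
    _ ≤ Nat.card (ball σ (n * k)) :=
      Nat.card_le_card_of_injective (fun f ↦ ⟨_, mem_ball f⟩) fun f g h ↦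
        words_inj f g (congrArg Subtype.val h)

theorem wordEval_eq_lift {m : ℕ} {G : Type*} [Group G] (σ : Fin m → G)
    (w : List (Fin m × Bool)) : wordEval σ w = FreeGroup.lift σ (mk w) := by
  simp only [wordEval, FreeGroup.lift_mk, Bool.cond_eq_ite]

theorem wordEval_mk_of {m : ℕ} (N : Subgroup (FreeGroup (Fin m))) [N.Normal]
    (w : List (Fin m × Bool)) :
    wordEval (fun i ↦ (QuotientGroup.mk (FreeGroup.of i) : FreeGroup (Fin m) ⧸ N)) w =
      QuotientGroup.mk (mk w) := by
  rw [wordEval_eq_lift]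
  exact (FreeGroup.lift_unique (QuotientGroup.mk' N) fun _ ↦ rfl).symm

theorem mul_rpow_le_ncard_goodWords_rpow {m k : ℕ} (hk : 2 ≤ k) {φ : FreeGroup (Fin m) → ℤ}
    (hφ : ∀ x y, φ (x * y) = φ x + φ y) {a : Fin m × Bool} (ha : 0 < φ (mk [a])) :
    (2 * (m : ℝ) - 1) * ((m - 1) / (2 * m - 1) ^ 2) ^ (1 / (k : ℝ)) ≤
      ((goodWords φ a k).ncard : ℝ) ^ (1 / (k : ℝ)) := by
  have hm : (1 : ℝ) ≤ m := by exact_mod_cast a.1.pos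
  obtain ⟨n, rfl⟩ := Nat.exists_eq_add_of_le' hk
  have hD : 0 < 2 * (m : ℝ) - 1 := by linarith
  calc (2 * (m : ℝ) - 1) * ((m - 1) / (2 * m - 1) ^ 2) ^ (1 / ((n + 2 : ℕ) : ℝ))
      = ((2 * (m : ℝ) - 1) ^ (n + 2) * ((m - 1) / (2 * m - 1) ^ 2)) ^ (1 / ((n + 2 : ℕ) : ℝ)) := by
        rw [Real.mul_rpow (by positivity) (div_nonneg (by linarith) (by positivity)), one_div,
          Real.pow_rpow_inv_natCast hD.le (by omega)]
    _ = ((2 * (m : ℝ) - 1) ^ n * (m - 1)) ^ (1 / ((n + 2 : ℕ) : ℝ)) := by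
      rw [pow_add, mul_assoc, mul_div_cancel₀ _ (by positivity)]
    _ ≤ _ := by
      refine Real.rpow_le_rpow (mul_nonneg (by positivity) (by linarith)) ?_ (by positivity)
      have card_le := pow_mul_le_ncard_goodWords hφ ha n
      rw [Fintype.card_fin] at card_le
      have hm' : 1 ≤ m := a.1.pos
      rw [← Nat.cast_le (α := ℝ), Nat.cast_mul, Nat.cast_pow, Nat.cast_sub (by omega),
        Nat.cast_sub hm'] at card_le
      exact_mod_cast card_le

theorem four_mul_mul_sq_div_le {x : ℝ} (hx : 1 ≤ x) :
    4 * x * (x - 1) ^ 2 / (2 * x - 1) ^ 4 ≤ (x - 1) / (2 * x - 1) ^ 2 := by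
  have : 0 < 2 * x - 1 := by linarith
  rw [div_le_div_iff₀ (by positivity) (by positivity)]
  calc 4 * x * (x - 1) ^ 2 * (2 * x - 1) ^ 2
      = 4 * x * (x - 1) * ((x - 1) * (2 * x - 1) ^ 2) := by ring
    _ ≤ (2 * x - 1) ^ 2 * ((x - 1) * (2 * x - 1) ^ 2) :=
      mul_le_mul_of_nonneg_right (by linarith) (mul_nonneg (by linarith) (by positivity))
    _ = (x - 1) * (2 * x - 1) ^ 4 := by ring

theorem mul_four_mul_mul_sq_div_rpow_le {x r : ℝ} (hx : 1 ≤ x) (hr : 0 ≤ r) :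
    (2 * x - 1) * (4 * x * (x - 1) ^ 2 / (2 * x - 1) ^ 4) ^ r ≤
      (2 * x - 1) * ((x - 1) / (2 * x - 1) ^ 2) ^ r :=
  mul_le_mul_of_nonneg_left
    (Real.rpow_le_rpow (by positivity) (four_mul_mul_sq_div_le hx) hr) (by linarith)

end Growth

theorem growth_rate_lower_bound_general {m k : ℕ} (hk : 3 ≤ k) {φ : FreeGroup (Fin m) → ℤ}
    (hφ : ∀ x y, φ (x * y) = φ x + φ y) {a : Fin m × Bool} (hpos : 0 < φ (mk [a]))
    (ha : ∀ x, φ (mk [x]) ≤ φ (mk [a])) (R : Subgroup (FreeGroup (Fin m))) [R.Normal]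
    (hker : ∀ g ∈ R, φ g = 0)
    (hρ : ∀ g ∈ R, g ≠ 1 → φ (mk [a]) * k * (2 * (k : ℤ) - 3) + 2 * k - 1 ≤ g.norm) :
    (2 * (m : ℝ) - 1) * ((m - 1) / (2 * m - 1) ^ 2) ^ (1 / (k : ℝ)) ≤
      growthRate fun i ↦ (QuotientGroup.mk (FreeGroup.of i) : FreeGroup (Fin m) ⧸ ⁅R, R⁆) := by
  refine (mul_rpow_le_ncard_goodWords_rpow (by omega) hφ hpos).trans <|
    rpow_le_growthRate (by omega) <|
      ncard_pow_le_ncard_ball (fun w hw ↦ hw.2) fun ws vs hws hvs hlen heq ↦ ?_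
  rw [wordEval_mk_of, wordEval_mk_of] at heq
  exact eq_of_inv_mk_flatten_mul_mem_commutator hk hφ hpos ha hker hρ hws hvs hlen
    (QuotientGroup.eq.1 heq.symm)

/-- Theorem 1. Let `R ⊴ F_m` be contained in the kernel of the
surjective homomorphism `φ : F_m → ℤ`, let `a` be a letter of maximal `φ`-value and
`C = φ(a)`. If `k ≥ 4` satisfies `ρ(R) ≥ Ck(2k-3) + 2k - 1` (every nontrivial element of
`R` has length at least this bound), then the growth rate of `F_m/R'` with respect to the
natural generators is at least `(2m-1) · (4m(m-1)²/(2m-1)⁴)^(1/k)`. -/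
theorem growth_rate_lower_bound (m k : ℕ) (hm : 2 ≤ m) (hk : 4 ≤ k)
    (φ : FreeGroup (Fin m) → ℤ)
    (hφ : ∀ x y : FreeGroup (Fin m), φ (x * y) = φ x + φ y)
    (hsurj : Function.Surjective φ)
    (a : Fin m × Bool)
    (ha : ∀ ℓ : Fin m × Bool, φ (FreeGroup.mk [ℓ]) ≤ φ (FreeGroup.mk [a]))
    (R : Subgroup (FreeGroup (Fin m))) [R.Normal]
    (hker : ∀ g ∈ R, φ g = 0)
    (hρ : ∀ g ∈ R, g ≠ 1 →
      φ (FreeGroup.mk [a]) * k * (2 * (k : ℤ) - 3) + 2 * k - 1 ≤ (FreeGroup.norm g : ℤ)) :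
    (2 * (m : ℝ) - 1) *
        ((4 * (m : ℝ) * ((m : ℝ) - 1) ^ 2) / (2 * (m : ℝ) - 1) ^ 4) ^ (1 / (k : ℝ)) ≤
      growthRate (fun i =>
        (QuotientGroup.mk (FreeGroup.of i) : FreeGroup (Fin m) ⧸ ⁅R, R⁆)) :=
  (mul_four_mul_mul_sq_div_rpow_le (by norm_cast; omega) (by positivity)).trans <|
    growth_rate_lower_bound_general (by omega) hφ (pos_of_forall_letter_le hφ ha hsurj) ha R hker hρ
end
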